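/- (Harris's polarization inequality on the polydisc.) Let m ≥ 2, N ≥ 1, let L : (ℂ^N)^m → ℂ be a symmetric m-linear form, and let P(z) = L(z,…,z) be the associated m-homogeneous polynomial. Then sup_{z,y ∈ closed unit polydisc of ℂ^N} |L(z,…,z,y)| ≤ (m/(m-1))^{m-1} · sup_{z ∈ closed unit polydisc of ℂ^N} |P(z)|, where L(z,…,z,y) has z in the first m-1 arguments and y in the last. -/

import Mathlib

open Finset

/-- Multilinear forms on `ℂ^N` are continuous. -/
lemma harris_continuous (k N : ℕ)
    (L : MultilinearMap ℂ (fun _ : Fin k => Fin N → ℂ) ℂ) : Continuous L := by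
  have h : (L : (Fin k → Fin N → ℂ) → ℂ) = fun z => ∑ r : Fin k → Fin N,
      (∏ i, z i (r i)) * L (fun i => Pi.single (r i) (1 : ℂ)) := by
    funext z
    have hz : z = fun i => ∑ j : Fin N, z i j • (Pi.single j (1 : ℂ) : Fin N → ℂ) := by
      funext i
      exact pi_eq_sum_univ' (z i)
    conv_lhs => rw [hz]
    rw [L.map_sum]
    refine Finset.sum_congr rfl fun r _ => ?_
    rw [L.map_smul_univ (fun i => z i (r i)) (fun i => Pi.single (r i) (1 : ℂ)), smul_eq_mul]
  rw [h]
  fun_prop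

/-- The basic Cauchy estimate along the complex line `z + t y`. -/
lemma harris_aux (n N : ℕ) (hn : 1 ≤ n)
    (L : MultilinearMap ℂ (fun _ : Fin (n + 1) => Fin N → ℂ) ℂ)
    (hsym : ∀ (σ : Equiv.Perm (Fin (n + 1))) (z : Fin (n + 1) → Fin N → ℂ),
      L (z ∘ σ) = L z) (M : ℝ)
    (hM : ∀ z : Fin N → ℂ, (∀ j, ‖z j‖ ≤ 1) → ‖L fun _ => z‖ ≤ M)
    (z y : Fin N → ℂ) (hz : ∀ j, ‖z j‖ ≤ 1) (hy : ∀ j, ‖y j‖ ≤ 1) :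
    ‖L (Fin.snoc (fun _ : Fin n => z) y)‖ ≤ (((n : ℝ) + 1) / n) ^ n * M := by
  have hn0 : (0 : ℝ) < n := by exact_mod_cast hn
  let Lc : ContinuousMultilinearMap ℂ (fun _ : Fin (n + 1) => Fin N → ℂ) ℂ :=
    ⟨L, harris_continuous _ _ L⟩
  have hsw : ∀ i : Fin (n + 1), L (Function.update (fun _ => z) i y)
      = L (Fin.snoc (fun _ : Fin n => z) y) := by
    intro i
    rw [← hsym (Equiv.swap i (Fin.last n)) (Fin.snoc (fun _ : Fin n => z) y)]
    have hs : (Fin.snoc (fun _ : Fin n => z) y : Fin (n + 1) → Fin N → ℂ)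
        = Function.update (fun _ => z) (Fin.last n) y := by
      funext k
      refine Fin.lastCases ?_ (fun k => ?_) k
      · simp
      · simp [Fin.castSucc_ne_last]
    congr 1
    rw [hs]
    funext k
    simp only [Function.comp, Function.update_apply]
    have : k = i ↔ Equiv.swap i (Fin.last n) k = Fin.last n := by
      rw [Equiv.swap_apply_eq_iff, Equiv.swap_apply_right]
    simp [this]
  have hder : ∀ t : ℂ, HasDerivAt (fun t : ℂ => L (fun _ : Fin (n + 1) => z + t • y))
      (Lc.linearDeriv (fun _ => z + t • y) (fun _ => y)) t := by
    intro t
    have h1 : HasDerivAt (fun t : ℂ => (fun _ : Fin (n + 1) => z + t • y)) (fun _ => y) t := by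
      rw [hasDerivAt_pi]
      intro _
      simpa using ((hasDerivAt_id t).smul_const y).const_add z
    exact (Lc.hasFDerivAt (fun _ => z + t • y)).comp_hasDerivAt t h1
  have hd0 : deriv (fun t : ℂ => L (fun _ : Fin (n + 1) => z + t • y)) 0
      = ((n : ℂ) + 1) * L (Fin.snoc (fun _ : Fin n => z) y) := by
    rw [(hder 0).deriv, ContinuousMultilinearMap.linearDeriv_apply]
    have : ∀ i : Fin (n + 1), Lc (Function.update (fun _ => z) i y)
      = L (Fin.snoc (fun _ : Fin n => z) y) := hsw
    simp [this]
  have hcau := Complex.norm_deriv_le_of_forall_mem_sphere_norm_le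
    (f := fun t : ℂ => L (fun _ : Fin (n + 1) => z + t • y)) (c := 0) (R := 1 / (n : ℝ))
    (C := (((n : ℝ) + 1) / n) ^ (n + 1) * M) (by positivity)
    (Differentiable.diffContOnCl fun t => (hder t).differentiableAt) (by
      intro t ht
      have ht' : ‖t‖ = 1 / n := by simpa using ht
      have hc : (((n : ℂ) + 1) / n) ≠ 0 := by
        have : (n : ℂ) ≠ 0 := by exact_mod_cast hn0.ne'
        have : (n : ℂ) + 1 ≠ 0 := by exact_mod_cast n.succ_ne_zero
        positivity
      have hnc : ‖((n : ℂ) + 1) / n‖ = ((n : ℝ) + 1) / n := by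
        rw [norm_div]
        norm_cast
      set c : ℂ := ((n : ℂ) + 1) / n with hcdef
      have e : (fun _ : Fin (n + 1) => z + t • y)
          = fun _ : Fin (n + 1) => c • (c⁻¹ • (z + t • y)) := by
        funext _
        rw [smul_inv_smul₀ hc]
      have e2 := L.map_smul_univ (fun _ => c) (fun _ => c⁻¹ • (z + t • y))
      beta_reduce at e2 ⊢
      rw [e, e2]
      simp only [Finset.prod_const, Finset.card_univ, Fintype.card_fin, norm_smul, norm_pow, hnc]
      gcongr
      apply hM
      intro j
      simp only [Pi.smul_apply, Pi.add_apply, smul_eq_mul, norm_mul, norm_inv, hnc]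
      rw [inv_mul_le_iff₀ (by positivity)]
      calc ‖z j + t * y j‖ ≤ ‖z j‖ + ‖t‖ * ‖y j‖ := by
            rw [← norm_mul]; exact norm_add_le _ _
        _ ≤ 1 + 1 / n * 1 := by rw [ht']; gcongr; exacts [hz j, hy j]
        _ = ((n : ℝ) + 1) / n * 1 := by field_simp)
  rw [hd0, norm_mul] at hcau
  have h1 : ‖(n : ℂ) + 1‖ = (n : ℝ) + 1 := by norm_cast
  rw [h1] at hcau
  have h2 : (((n : ℝ) + 1) / n) ^ (n + 1) * M / (1 / (n : ℝ))
      = ((n : ℝ) + 1) * ((((n : ℝ) + 1) / n) ^ n * M) := by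
    rw [pow_succ]
    field_simp
  rw [h2] at hcau
  exact le_of_mul_le_mul_left hcau (by positivity)

/-- **Harris's polarization inequality on the polydisc.** Let `m = n+1 ≥ 2`, let `L`
be a symmetric `m`-linear form on `ℂ^N` and `P(z) = L(z,…,z)`. Then
`sup_{z,y ∈ polydisc} |L(z,…,z,y)| ≤ (m/(m-1))^{m-1} · sup_{z ∈ polydisc} |P(z)|`. -/
theorem harris_polarization (n N : ℕ) (hn : 1 ≤ n) (hN : 1 ≤ N)
    (L : MultilinearMap ℂ (fun _ : Fin (n + 1) => Fin N → ℂ) ℂ)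
    (hsym : ∀ (σ : Equiv.Perm (Fin (n + 1))) (z : Fin (n + 1) → Fin N → ℂ),
      L (z ∘ σ) = L z) :
    (⨆ z ∈ {z : Fin N → ℂ | ∀ j, ‖z j‖ ≤ 1},
        ⨆ y ∈ {y : Fin N → ℂ | ∀ j, ‖y j‖ ≤ 1},
          ‖L (Fin.snoc (fun _ : Fin n => z) y)‖)
      ≤ (((n : ℝ) + 1) / n) ^ n *
        ⨆ z ∈ {z : Fin N → ℂ | ∀ j, ‖z j‖ ≤ 1},
          ‖L fun _ => z‖ := by
  let Lc : ContinuousMultilinearMap ℂ (fun _ : Fin (n + 1) => Fin N → ℂ) ℂ :=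
    ⟨L, harris_continuous _ _ L⟩
  have hM0 : 0 ≤ ⨆ z ∈ {z : Fin N → ℂ | ∀ j, ‖z j‖ ≤ 1}, ‖L fun _ => z‖ :=
    Real.iSup_nonneg fun z => Real.iSup_nonneg fun _ => norm_nonneg _
  have hM : ∀ z : Fin N → ℂ, (∀ j, ‖z j‖ ≤ 1) →
      ‖L fun _ => z‖ ≤ ⨆ z ∈ {z : Fin N → ℂ | ∀ j, ‖z j‖ ≤ 1}, ‖L fun _ => z‖ := by
    intro z hz
    have hb : BddAbove (Set.range fun z : Fin N → ℂ =>
        ⨆ (_ : z ∈ {z : Fin N → ℂ | ∀ j, ‖z j‖ ≤ 1}), ‖L fun _ => z‖) := by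
      refine ⟨‖Lc‖, ?_⟩
      rintro _ ⟨w, rfl⟩
      refine Real.iSup_le (fun hw => ?_) (norm_nonneg _)
      have h := Lc.le_opNorm (fun _ => w)
      have hw1 : ‖w‖ ≤ 1 := (pi_norm_le_iff_of_nonneg zero_le_one).2 hw
      refine h.trans (mul_le_of_le_one_right (norm_nonneg _) ?_)
      exact Finset.prod_le_one (fun _ _ => norm_nonneg _) (fun _ _ => hw1)
    refine le_trans ?_ (le_ciSup hb z)
    have hz' : z ∈ {z : Fin N → ℂ | ∀ j, ‖z j‖ ≤ 1} := hz
    exact le_of_eq (ciSup_pos (f := fun _ => ‖L fun _ => z‖) hz').symm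
  have hR : 0 ≤ (((n : ℝ) + 1) / n) ^ n *
      ⨆ z ∈ {z : Fin N → ℂ | ∀ j, ‖z j‖ ≤ 1}, ‖L fun _ => z‖ :=
    mul_nonneg (by positivity) hM0
  refine Real.iSup_le (fun z => Real.iSup_le (fun hz => Real.iSup_le (fun y =>
    Real.iSup_le (fun hy => ?_) hR) hR) hR) hR
  exact harris_aux n N hn L hsym _ hM z y hz hy
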